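/- arXiv:2001.04169 — 3 statements merged into one kernel-verified Lean document; each statement's English description precedes it below -/
import Mathlib

section
/- Let n ≥ 2 be an integer, let a > 0, and let K ⊆ ℝⁿ be a compact convex set such that the n-dimensional Lebesgue measure of K ∩ {x ∈ ℝⁿ : 0 ≤ x₁ ≤ r} equals rⁿ/n! for every r ∈ [0, a]. Then for every r ∈ (0, a), the (n−1)-dimensional Lebesgue measure of the slice {y ∈ ℝ^{n−1} : (r, y) ∈ K} equals r^{n−1}/(n−1)!. -/
/-!
Write `A r` for the measure of the slice of a convex set `K ⊆ ℝ × E` at height `r`. Shrinking the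
slice at height `r` towards a point of `K` at height `t` by a factor `c` keeps it inside `K`, so
`c ^ dim E * A r ≤ A (c * r + (1 - c) * t)`. Using points of `K` above and below a height `r`
interior to the projection of `K`, this pins `A s` between two multiples of `A r` whose factors
tend to `1` as `s → r`, so `A` is continuous at `r`. By Tonelli the slab volume is a primitive of
`A`; differentiating it gives `A r` at every such `r`, not merely almost every one.
-/

open MeasureTheory Set Filter Topology Module

section SliceMeasure

variable {α β : Type*} [MeasurableSpace α] [MeasurableSpace β] {μ : Measure α} {ν : Measure β}
  [SFinite ν] {s t : Set (α × β)}

theorem measure_prodMk_preimage_congr_ae (h : s =ᵐ[μ.prod ν] t) :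
    (fun x => ν (Prod.mk x ⁻¹' s)) =ᵐ[μ] fun x => ν (Prod.mk x ⁻¹' t) :=
  (Measure.ae_ae_of_ae_prod h).mono fun _ hx => measure_congr hx

theorem aemeasurable_measure_prodMk_preimage (hs : NullMeasurableSet s (μ.prod ν)) :
    AEMeasurable (fun x => ν (Prod.mk x ⁻¹' s)) μ :=
  ⟨_, measurable_measure_prodMk_left (measurableSet_toMeasurable _ s),
    measure_prodMk_preimage_congr_ae hs.toMeasurable_ae_eq.symm⟩

theorem prod_apply_of_nullMeasurableSet (hs : NullMeasurableSet s (μ.prod ν)) :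
    μ.prod ν s = ∫⁻ x, ν (Prod.mk x ⁻¹' s) ∂μ := by
  rw [← measure_toMeasurable, Measure.prod_apply (measurableSet_toMeasurable _ s)]
  exact lintegral_congr_ae (measure_prodMk_preimage_congr_ae hs.toMeasurable_ae_eq)

theorem prod_apply_inter_fst_preimage [SFinite μ] (hs : NullMeasurableSet s (μ.prod ν))
    {S : Set α} (hS : MeasurableSet S) :
    μ.prod ν (s ∩ Prod.fst ⁻¹' S) = ∫⁻ x in S, ν (Prod.mk x ⁻¹' s) ∂μ := by
  have restrict_prod : (μ.restrict S).prod ν = (μ.prod ν).restrict (Prod.fst ⁻¹' S) := by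
    rw [Measure.restrict_prod_eq_prod_univ, prod_univ]
  rw [← Measure.restrict_apply' (measurable_fst hS), ← restrict_prod]
  refine prod_apply_of_nullMeasurableSet ?_
  rw [restrict_prod]
  exact hs.mono_ac Measure.restrict_le_self.absolutelyContinuous

theorem ae_measure_prodMk_preimage_lt_top [SFinite μ] (hs : NullMeasurableSet s (μ.prod ν))
    {S : Set α} (hS : MeasurableSet S) (hfin : μ.prod ν (s ∩ Prod.fst ⁻¹' S) ≠ ⊤) :
    ∀ᵐ x ∂μ.restrict S, ν (Prod.mk x ⁻¹' s) < ⊤ := by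
  rw [prod_apply_inter_fst_preimage hs hS] at hfin
  exact ae_lt_top' (aemeasurable_measure_prodMk_preimage hs).restrict hfin

theorem integrableOn_measureReal_prodMk_preimage [SFinite μ]
    (hs : NullMeasurableSet s (μ.prod ν)) {S : Set α} (hS : MeasurableSet S)
    (hfin : μ.prod ν (s ∩ Prod.fst ⁻¹' S) ≠ ⊤) :
    IntegrableOn (fun x => ν.real (Prod.mk x ⁻¹' s)) S μ := by
  rw [prod_apply_inter_fst_preimage hs hS] at hfin
  exact integrable_toReal_of_lintegral_ne_top
    (aemeasurable_measure_prodMk_preimage hs).restrict hfin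

theorem measureReal_prod_inter_fst_preimage [SFinite μ] (hs : NullMeasurableSet s (μ.prod ν))
    {S : Set α} (hS : MeasurableSet S) (hfin : μ.prod ν (s ∩ Prod.fst ⁻¹' S) ≠ ⊤) :
    (μ.prod ν).real (s ∩ Prod.fst ⁻¹' S) = ∫ x in S, ν.real (Prod.mk x ⁻¹' s) ∂μ := by
  rw [measureReal_def, prod_apply_inter_fst_preimage hs hS]
  exact (integral_toReal (aemeasurable_measure_prodMk_preimage hs).restrict
    (ae_measure_prodMk_preimage_lt_top hs hS hfin)).symm

end SliceMeasure

theorem hasDerivAt_pow_succ_div_factorial (m : ℕ) (x : ℝ) :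
    HasDerivAt (fun x : ℝ => x ^ (m + 1) / (m + 1).factorial) (x ^ m / m.factorial) x := by
  convert! (hasDerivAt_pow (m + 1) x).div_const ((m + 1).factorial : ℝ) using 1
  rw [Nat.factorial_succ, Nat.add_sub_cancel, Nat.cast_mul, mul_div_mul_left _ _ (by positivity)]

theorem strictMonoOn_ofReal_pow_succ_div_factorial (m : ℕ) :
    StrictMonoOn (fun x : ℝ => ENNReal.ofReal (x ^ (m + 1) / (m + 1).factorial)) (Ici 0) := by
  intro x hx y _ hxy
  have x_nonneg : 0 ≤ x := hx
  have y_pos : 0 < y := x_nonneg.trans_lt hxy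
  refine (ENNReal.ofReal_lt_ofReal_iff (by positivity)).2 ?_
  gcongr

theorem Ioo_subset_interior_image_fst {E : Type*} [AddCommGroup E] [Module ℝ E]
    {K : Set (ℝ × E)} (hK : Convex ℝ K) {p q : ℝ × E} (hp : p ∈ K) (hq : q ∈ K) :
    Ioo p.1 q.1 ⊆ interior (Prod.fst '' K) := by
  have image_convex : Convex ℝ (Prod.fst '' K) := hK.linear_image (LinearMap.fst ℝ ℝ E)
  exact interior_maximal (Ioo_subset_Icc_self.trans <| image_convex.ordConnected.out
    (mem_image_of_mem _ hp) (mem_image_of_mem _ hq)) isOpen_Ioo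

theorem mem_interior_image_fst_of_strictMonoOn_measure_slab {E : Type*} [AddCommGroup E]
    [Module ℝ E] [MeasurableSpace E] {ν : Measure (ℝ × E)} {K : Set (ℝ × E)} (hK : Convex ℝ K)
    {a b r : ℝ} (hmono : StrictMonoOn (fun x => ν (K ∩ Prod.fst ⁻¹' Icc a x)) (Icc a b))
    (hr : r ∈ Ioo a b) : r ∈ interior (Prod.fst '' K) := by
  have exists_mem_between : ∀ x ∈ Icc a b, ∀ y ∈ Icc a b, x < y → ∃ p ∈ K, p.1 ∈ Ioc x y := by
    intro x hx y hy hxy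
    by_contra! hempty
    refine (hmono hx hy hxy).not_ge (measure_mono fun p hp => ⟨hp.1, hp.2.1, ?_⟩)
    exact not_lt.1 fun hxp => hempty p hp.1 ⟨hxp, hp.2.2⟩
  obtain ⟨har, hrb⟩ := hr
  obtain ⟨x, hax, hxr⟩ := exists_between har
  obtain ⟨p, hp, -, hpx⟩ :=
    exists_mem_between a ⟨le_rfl, (har.trans hrb).le⟩ x ⟨hax.le, (hxr.trans hrb).le⟩ hax
  obtain ⟨q, hq, hrq, -⟩ :=
    exists_mem_between r ⟨har.le, hrb.le⟩ b ⟨(har.trans hrb).le, le_rfl⟩ hrb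
  exact Ioo_subset_interior_image_fst hK hp hq ⟨hpx.trans_lt hxr, hrq⟩

section ConvexSlice

variable {E : Type*} [NormedAddCommGroup E] [NormedSpace ℝ E] [FiniteDimensional ℝ E]
  [MeasurableSpace E] [BorelSpace E] {μ : Measure E} [μ.IsAddHaarMeasure] {K : Set (ℝ × E)}
  {r : ℝ}

theorem ofReal_pow_mul_measure_slice_le_lineMap (hK : Convex ℝ K) {t c : ℝ}
    (ht : t ∈ Prod.fst '' K) (hc : c ∈ Icc (0 : ℝ) 1) (r : ℝ) :
    ENNReal.ofReal (c ^ finrank ℝ E) * μ (Prod.mk r ⁻¹' K) ≤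
      μ (Prod.mk (AffineMap.lineMap t r c) ⁻¹' K) := by
  obtain ⟨⟨t, y⟩, hy, rfl⟩ := ht
  have image_subset : AffineMap.homothety y c '' (Prod.mk r ⁻¹' K) ⊆
      Prod.mk (AffineMap.lineMap t r c) ⁻¹' K := by
    rintro _ ⟨z, hz, rfl⟩
    exact hK.lineMap_mem hy hz hc
  calc ENNReal.ofReal (c ^ finrank ℝ E) * μ (Prod.mk r ⁻¹' K)
      = μ (AffineMap.homothety y c '' (Prod.mk r ⁻¹' K)) := by
        rw [Measure.addHaar_image_homothety, abs_of_nonneg (pow_nonneg hc.1 _)]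
    _ ≤ _ := measure_mono image_subset

theorem ofReal_one_sub_pow_mul_measure_slice_le (hK : Convex ℝ K) {d u : ℝ}
    (hd : r + d ∈ Prod.fst '' K) (hu : u ∈ Icc (0 : ℝ) 1) :
    ENNReal.ofReal ((1 - u) ^ finrank ℝ E) * μ (Prod.mk r ⁻¹' K) ≤
      μ (Prod.mk (r + u * d) ⁻¹' K) := by
  have between : AffineMap.lineMap (r + d) r (1 - u) = r + u * d := by
    rw [AffineMap.lineMap_apply_ring]; ring
  simpa only [between] using ofReal_pow_mul_measure_slice_le_lineMap (μ := μ) hK hd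
    ⟨sub_nonneg.2 hu.2, sub_le_self 1 hu.1⟩ r

theorem measure_slice_le_ofReal_one_add_pow_mul (hK : Convex ℝ K) {d u : ℝ}
    (hd : r - d ∈ Prod.fst '' K) (hu : 0 ≤ u) :
    μ (Prod.mk (r + u * d) ⁻¹' K) ≤
      ENNReal.ofReal ((1 + u) ^ finrank ℝ E) * μ (Prod.mk r ⁻¹' K) := by
  have one_add_pos : 0 < 1 + u := by positivity
  have between : AffineMap.lineMap (r - d) (r + u * d) (1 + u)⁻¹ = r := by
    rw [AffineMap.lineMap_apply_ring]; field_simp; ring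
  have shrink := ofReal_pow_mul_measure_slice_le_lineMap (μ := μ) hK hd
    ⟨inv_nonneg.2 one_add_pos.le, inv_le_one_of_one_le₀ (le_add_of_nonneg_right hu)⟩ (r + u * d)
  rwa [between, inv_pow, ENNReal.ofReal_inv_of_pos (by positivity), mul_comm, ← div_eq_mul_inv,
    ENNReal.div_le_iff (by positivity) ENNReal.ofReal_ne_top, mul_comm (μ _)] at shrink

variable (μ) in
theorem exists_pos_forall_measure_slice_mem_Icc (hK : Convex ℝ K)
    (hr : r ∈ interior (Prod.fst '' K)) :
    ∃ δ > 0, ∀ s, |s - r| ≤ δ → μ (Prod.mk s ⁻¹' K) ∈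
      Icc (ENNReal.ofReal ((1 - |s - r| / δ) ^ finrank ℝ E) * μ (Prod.mk r ⁻¹' K))
        (ENNReal.ofReal ((1 + |s - r| / δ) ^ finrank ℝ E) * μ (Prod.mk r ⁻¹' K)) := by
  obtain ⟨δ, hδ, hball⟩ := Metric.nhds_basis_closedBall.mem_iff.1 (mem_interior_iff_mem_nhds.1 hr)
  have add_mem : ∀ d, |d| = δ → r + d ∈ Prod.fst '' K := fun d hd =>
    hball (by rw [Metric.mem_closedBall, Real.dist_eq, add_sub_cancel_left, hd])
  refine ⟨δ, hδ, fun s hs => ?_⟩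
  obtain ⟨d, hd, hsd⟩ : ∃ d, |d| = δ ∧ r + |s - r| / δ * d = s := by
    rcases abs_cases (s - r) with ⟨habs, -⟩ | ⟨habs, -⟩
    · exact ⟨δ, abs_of_pos hδ, by rw [habs]; field_simp; ring⟩
    · exact ⟨-δ, by rw [abs_neg, abs_of_pos hδ], by rw [habs]; field_simp; ring⟩
  have lower := ofReal_one_sub_pow_mul_measure_slice_le (μ := μ) hK (add_mem d hd)
    ⟨by positivity, div_le_one_of_le₀ hs hδ.le⟩
  have upper := measure_slice_le_ofReal_one_add_pow_mul (μ := μ) (u := |s - r| / δ) hK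
    (sub_eq_add_neg r d ▸ add_mem (-d) ((abs_neg d).trans hd)) (by positivity)
  rw [hsd] at lower upper
  exact ⟨lower, upper⟩

theorem continuousAt_measure_slice (hK : Convex ℝ K) (hr : r ∈ interior (Prod.fst '' K)) :
    ContinuousAt (fun s => μ (Prod.mk s ⁻¹' K)) r := by
  obtain ⟨δ, hδ, hbounds⟩ := exists_pos_forall_measure_slice_mem_Icc μ hK hr
  have tendsto_mul (g : ℝ → ℝ) (hg : ContinuousAt g r) (hgr : g r = 1) :
      Tendsto (fun s => ENNReal.ofReal (g s) * μ (Prod.mk r ⁻¹' K)) (𝓝 r)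
        (𝓝 (μ (Prod.mk r ⁻¹' K))) := by
    have tendsto_one : Tendsto (fun s => ENNReal.ofReal (g s)) (𝓝 r) (𝓝 1) := by
      simpa only [hgr, ENNReal.ofReal_one] using ENNReal.tendsto_ofReal hg.tendsto
    simpa only [one_mul] using ENNReal.Tendsto.mul_const tendsto_one (Or.inl one_ne_zero)
  have near : ∀ᶠ s in 𝓝 r, |s - r| ≤ δ := Metric.closedBall_mem_nhds r hδ
  exact tendsto_of_tendsto_of_tendsto_of_le_of_le'
    (tendsto_mul (fun s => (1 - |s - r| / δ) ^ finrank ℝ E) (by fun_prop) (by simp))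
    (tendsto_mul (fun s => (1 + |s - r| / δ) ^ finrank ℝ E) (by fun_prop) (by simp))
    (near.mono fun s hs => (hbounds s hs).1) (near.mono fun s hs => (hbounds s hs).2)

theorem measure_slice_ne_top_of_frequently (hK : Convex ℝ K)
    (hr : r ∈ interior (Prod.fst '' K)) (hfreq : ∃ᶠ s in 𝓝 r, μ (Prod.mk s ⁻¹' K) ≠ ⊤) :
    μ (Prod.mk r ⁻¹' K) ≠ ⊤ := by
  obtain ⟨δ, hδ, hbounds⟩ := exists_pos_forall_measure_slice_mem_Icc μ hK hr
  obtain ⟨s, hs, hsδ⟩ := (hfreq.and_eventually (Metric.ball_mem_nhds r hδ)).exists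
  have factor_pos : 0 < (1 - |s - r| / δ) ^ finrank ℝ E :=
    pow_pos (sub_pos.2 ((div_lt_one hδ).2 hsδ)) _
  intro htop
  have lower := (hbounds s hsδ.le).1
  rw [htop, ENNReal.mul_top (ENNReal.ofReal_pos.2 factor_pos).ne'] at lower
  exact hs (top_le_iff.1 lower)

variable {a b : ℝ}

theorem measure_slice_ne_top (hK : Convex ℝ K) (hr : r ∈ interior (Prod.fst '' K))
    (hrab : r ∈ Ioo a b) (hfin : volume.prod μ (K ∩ Prod.fst ⁻¹' Icc a b) ≠ ⊤) :
    μ (Prod.mk r ⁻¹' K) ≠ ⊤ := by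
  have dense_finite := Measure.dense_of_ae <| (ae_restrict_iff' measurableSet_Icc).1 <|
    ae_measure_prodMk_preimage_lt_top (hK.nullMeasurableSet _) measurableSet_Icc hfin
  refine measure_slice_ne_top_of_frequently hK hr ?_
  exact ((mem_closure_iff_frequently.1 (dense_finite r)).and_eventually
    (Icc_mem_nhds hrab.1 hrab.2)).mono fun s hs => (hs.1 hs.2).ne

theorem hasDerivAt_measureReal_slab (hK : Convex ℝ K) (hr : r ∈ interior (Prod.fst '' K))
    (hrab : r ∈ Ioo a b) (hfin : volume.prod μ (K ∩ Prod.fst ⁻¹' Icc a b) ≠ ⊤) :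
    HasDerivAt (fun x => (volume.prod μ).real (K ∩ Prod.fst ⁻¹' Icc a x))
      (μ.real (Prod.mk r ⁻¹' K)) r := by
  have null_measurable : NullMeasurableSet K (volume.prod μ) := hK.nullMeasurableSet _
  have hfin_sub {x : ℝ} (hx : x ≤ b) : volume.prod μ (K ∩ Prod.fst ⁻¹' Icc a x) ≠ ⊤ :=
    measure_ne_top_of_subset (by gcongr) hfin
  have integrable : IntervalIntegrable (fun x => μ.real (Prod.mk x ⁻¹' K)) volume a r :=
    (intervalIntegrable_iff_integrableOn_Icc_of_le hrab.1.le).2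
      (integrableOn_measureReal_prodMk_preimage null_measurable measurableSet_Icc
        (hfin_sub hrab.2.le))
  have ae_strongly_measurable : AEStronglyMeasurable (fun x => μ.real (Prod.mk x ⁻¹' K)) :=
    (aemeasurable_measure_prodMk_preimage null_measurable).ennreal_toReal.aestronglyMeasurable
  have continuous_at : ContinuousAt (fun x => μ.real (Prod.mk x ⁻¹' K)) r :=
    (ENNReal.tendsto_toReal (measure_slice_ne_top hK hr hrab hfin)).comp
      (continuousAt_measure_slice hK hr)
  refine (intervalIntegral.integral_hasDerivAt_right integrable
    ae_strongly_measurable.stronglyMeasurableAtFilter continuous_at).congr_of_eventuallyEq ?_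
  filter_upwards [Icc_mem_nhds hrab.1 hrab.2] with x hx
  rw [measureReal_prod_inter_fst_preimage null_measurable measurableSet_Icc (hfin_sub hx.2),
    integral_Icc_eq_integral_Ioc, intervalIntegral.integral_of_le hx.1]

theorem slice_volume_from_slab_volume_general (hK : Convex ℝ K) {m : ℕ}
    (hvol : ∀ x ∈ Icc (0 : ℝ) a, volume.prod μ (K ∩ Prod.fst ⁻¹' Icc 0 x) =
      ENNReal.ofReal (x ^ (m + 1) / (m + 1).factorial)) (hr : r ∈ Ioo 0 a) :
    μ (Prod.mk r ⁻¹' K) = ENNReal.ofReal (r ^ m / m.factorial) := by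
  have slab_strictMonoOn :
      StrictMonoOn (fun x => volume.prod μ (K ∩ Prod.fst ⁻¹' Icc 0 x)) (Icc 0 a) :=
    ((strictMonoOn_ofReal_pow_succ_div_factorial m).mono Icc_subset_Ici_self).congr
      fun x hx => (hvol x hx).symm
  have hr_interior := mem_interior_image_fst_of_strictMonoOn_measure_slab hK slab_strictMonoOn hr
  have hfin : volume.prod μ (K ∩ Prod.fst ⁻¹' Icc 0 a) ≠ ⊤ :=
    hvol a ⟨(hr.1.trans hr.2).le, le_rfl⟩ ▸ ENNReal.ofReal_ne_top
  have slab_eventuallyEq : (fun x => (volume.prod μ).real (K ∩ Prod.fst ⁻¹' Icc 0 x)) =ᶠ[𝓝 r]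
      fun x => x ^ (m + 1) / (m + 1).factorial := by
    filter_upwards [Icc_mem_nhds hr.1 hr.2] with x hx
    have x_nonneg : 0 ≤ x := hx.1
    rw [measureReal_def, hvol x hx, ENNReal.toReal_ofReal (by positivity)]
  have slice_real : μ.real (Prod.mk r ⁻¹' K) = r ^ m / m.factorial :=
    (hasDerivAt_measureReal_slab hK hr_interior hr hfin).unique
      ((hasDerivAt_pow_succ_div_factorial m r).congr_of_eventuallyEq slab_eventuallyEq)
  rw [← slice_real, ofReal_measureReal (measure_slice_ne_top hK hr_interior hr hfin)]

end ConvexSlice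

/-- If the slab volumes of a compact convex set `K ⊆ ℝ × ℝ^{n-1}` satisfy
`vol(K ∩ {0 ≤ x₁ ≤ r}) = rⁿ/n!` for all `r ∈ [0, a]`, then the slice of `K` at any
`r ∈ (0, a)` has `(n-1)`-dimensional volume `r^{n-1}/(n-1)!`. -/
theorem slice_volume_from_slab_volume (n : ℕ) (hn : 2 ≤ n) (a : ℝ) (ha : 0 < a)
    (K : Set (ℝ × (Fin (n - 1) → ℝ))) (hK : IsCompact K) (hconv : Convex ℝ K)
    (hvol : ∀ r ∈ Set.Icc (0 : ℝ) a,
      MeasureTheory.volume (K ∩ {x : ℝ × (Fin (n - 1) → ℝ) | 0 ≤ x.1 ∧ x.1 ≤ r}) =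
        ENNReal.ofReal (r ^ n / n.factorial)) :
    ∀ r ∈ Set.Ioo (0 : ℝ) a,
      MeasureTheory.volume {y : Fin (n - 1) → ℝ | (r, y) ∈ K} =
        ENNReal.ofReal (r ^ (n - 1) / (n - 1).factorial) := by
  intro r hr
  obtain ⟨m, rfl⟩ : ∃ m, n = m + 1 := ⟨n - 1, by omega⟩
  exact slice_volume_from_slab_volume_general hconv hvol hr
end

section
/- Let n ≥ 1 be an integer, let a > 0, and let K ⊆ ℝⁿ be a compact convex set containing the origin such that the Lebesgue measure of K ∩ {x ∈ ℝⁿ : 0 ≤ x₁ ≤ r} equals rⁿ/n! for every r ∈ [0, a]. Then K ∩ {x ∈ ℝⁿ : 0 ≤ x₁ ≤ a} = {λ·v : λ ∈ [0,1], v ∈ K, v₁ = a}, i.e. this portion of K is the cone with apex the origin over the slice Σ = K ∩ {x ∈ ℝⁿ : x₁ = a}. -/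
/-!
Write `S r` for the part of `K` in the slab `0 ≤ f ≤ r`. Convexity gives `t • S a ⊆ S (t * a)` for
`0 < t ≤ 1`. The volume condition says that both sides have the same positive finite measure, and a
closed subset of full measure in a convex set with interior is everything, so `S (t * a) = t • S a`.
Taking `t = f x / a` puts every `x ∈ S a` with `f x > 0` on a segment from `0` to the top slice. If
`f x = 0`, then `x ∈ S (t * a)` for all `t`, so `S a` contains a ray in the direction of `x`; having
finite measure, it cannot do so unless `x = 0`.
-/

open MeasureTheory Module Set
open scoped Pointwise

section ConvexMeasure

variable {E : Type*} [NormedAddCommGroup E] [NormedSpace ℝ E] {s t : Set E}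

theorem ball_midpoint_subset_of_convex {p q : E} {ε : ℝ} (hs : Convex ℝ s)
    (hp : Metric.ball p ε ⊆ s) (hq : q ∈ s) : Metric.ball (midpoint ℝ p q) (ε / 2) ⊆ s := by
  intro z hz
  have mem_ball : p + (2 : ℝ) • (z - midpoint ℝ p q) ∈ Metric.ball p ε := by
    rw [mem_ball_iff_norm] at hz
    rw [mem_ball_iff_norm, add_sub_cancel_left, norm_smul, Real.norm_two]
    linarith
  convert hs.midpoint_mem (hp mem_ball) hq using 1
  simp only [midpoint_eq_smul_add, invOf_eq_inv]
  module

variable [MeasurableSpace E] {μ : Measure E}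

theorem subset_of_convex_of_measure_diff_eq_zero [μ.IsOpenPosMeasure] (hs : Convex ℝ s)
    (hs_int : (interior s).Nonempty) (ht : IsClosed t) (hst : μ (s \ t) = 0) : s ⊆ t := by
  have interior_diff_null : μ (interior s \ t) = 0 :=
    measure_mono_null (sdiff_subset_sdiff_left interior_subset) hst
  have interior_subset_t : interior s ⊆ t :=
    sdiff_eq_empty.1 <| (isOpen_interior.sdiff ht).eq_empty_of_measure_zero interior_diff_null
  calc
    s ⊆ closure s := subset_closure
    _ = closure (interior s) := (hs.closure_interior_eq_closure_of_nonempty_interior hs_int).symm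
    _ ⊆ t := closure_minimal interior_subset_t ht

variable [BorelSpace E] [μ.IsAddHaarMeasure]

theorem nonempty_interior_of_convex_of_measure_ne_zero [FiniteDimensional ℝ E]
    (hs : Convex ℝ s) (hμs : μ s ≠ 0) : (interior s).Nonempty := by
  rw [hs.interior_nonempty_iff_affineSpan_eq_top]
  by_contra hspan
  exact hμs (measure_mono_null (subset_affineSpan ℝ s) (μ.addHaar_affineSubspace _ hspan))

theorem eq_of_isClosed_subset_convex_of_measure_eq [FiniteDimensional ℝ E]
    (ht : IsClosed t) (hs : Convex ℝ s) (hts : t ⊆ s) (hμ : μ t = μ s) (hμs : μ s ≠ 0)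
    (hμs_top : μ s ≠ ⊤) : t = s := by
  refine hts.antisymm (subset_of_convex_of_measure_diff_eq_zero (μ := μ) hs
    (nonempty_interior_of_convex_of_measure_ne_zero hs hμs) ht ?_)
  rw [measure_sdiff hts ht.measurableSet.nullMeasurableSet (hμ ▸ hμs_top), hμ, tsub_self]

theorem measure_iUnion_ball_add_smul_eq_top {ε : ℝ} (hε : 0 < ε) (p : E) {w : E}
    (hw : 2 * ε ≤ ‖w‖) : μ (⋃ k : ℕ, Metric.ball (p + (k : ℝ) • w) ε) = ⊤ := by
  have disjoint_balls :
      Pairwise (Function.onFun Disjoint fun k : ℕ ↦ Metric.ball (p + (k : ℝ) • w) ε) := by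
    intro k l hkl
    have one_le : (1 : ℝ) ≤ |(k : ℝ) - l| := by
      exact_mod_cast Int.one_le_abs (sub_ne_zero.2 (Nat.cast_injective.ne hkl))
    refine Metric.ball_disjoint_ball ?_
    rw [dist_add_left, dist_eq_norm, ← sub_smul, norm_smul, Real.norm_eq_abs]
    calc
      ε + ε ≤ ‖w‖ := by linarith
      _ ≤ |(k : ℝ) - l| * ‖w‖ := le_mul_of_one_le_left (norm_nonneg w) one_le
  rw [measure_iUnion disjoint_balls fun _ ↦ Metric.isOpen_ball.measurableSet]
  simp only [μ.addHaar_ball_center]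
  exact ENNReal.tsum_const_eq_top_of_ne_zero (Metric.measure_ball_pos μ 0 hε).ne'

theorem measure_eq_top_of_convex_of_ray_subset (hs : Convex ℝ s)
    (hs_int : (interior s).Nonempty) {y v : E} (hv : v ≠ 0)
    (hray : ∀ r : ℝ, 0 ≤ r → y + r • v ∈ s) : μ s = ⊤ := by
  obtain ⟨p, hp⟩ := hs_int
  obtain ⟨ε, hε, ball_subset⟩ := Metric.mem_nhds_iff.1 (mem_interior_iff_mem_nhds.1 hp)
  obtain ⟨c, hc⟩ : ∃ c : ℝ, c * ‖v‖ = ε := ⟨ε / ‖v‖, div_mul_cancel₀ _ (norm_ne_zero_iff.2 hv)⟩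
  have hc_pos : 0 < c := pos_of_mul_pos_left (hc ▸ hε) (norm_nonneg v)
  refine measure_mono_top ?_ (measure_iUnion_ball_add_smul_eq_top (μ := μ) (half_pos hε)
    (midpoint ℝ p y) (w := c • v) ?_)
  · refine iUnion_subset fun k ↦ ?_
    have midpoint_eq : midpoint ℝ p (y + (2 * k * c) • v) = midpoint ℝ p y + (k : ℝ) • c • v := by
      simp only [midpoint_eq_smul_add, invOf_eq_inv]
      module
    rw [← midpoint_eq]
    exact ball_midpoint_subset_of_convex hs ball_subset (hray _ (by positivity))
  · rw [norm_smul, Real.norm_of_nonneg hc_pos.le, hc]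
    linarith

end ConvexMeasure

section SlabPart

variable {E : Type*} [NormedAddCommGroup E] [NormedSpace ℝ E] {K : Set E} {f : StrongDual ℝ E}
  {a r t : ℝ}

/-- The part of `K` in the slab `0 ≤ f ≤ r`; for `K ⊆ ℝⁿ` and `f` the first coordinate this is
`K ∩ {0 ≤ x₁ ≤ r}`. -/
def slabPart (K : Set E) (f : StrongDual ℝ E) (r : ℝ) : Set E :=
  K ∩ f ⁻¹' Icc 0 r

theorem convex_slabPart (hK : Convex ℝ K) (f : StrongDual ℝ E) (r : ℝ) :
    Convex ℝ (slabPart K f r) :=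
  hK.inter ((convex_Icc 0 r).linear_preimage f.toLinearMap)

theorem isClosed_slabPart (hK : IsClosed K) (f : StrongDual ℝ E) (r : ℝ) :
    IsClosed (slabPart K f r) :=
  hK.inter (isClosed_Icc.preimage f.continuous)

theorem smul_slabPart_subset (hK : Convex ℝ K) (h0 : 0 ∈ K) (f : StrongDual ℝ E) (r : ℝ)
    (ht : t ∈ Icc (0 : ℝ) 1) : t • slabPart K f r ⊆ slabPart K f (t * r) := by
  rintro _ ⟨x, ⟨hxK, hx_nonneg, hx_le⟩, rfl⟩
  refine ⟨hK.smul_mem_of_zero_mem h0 hxK ht, ?_⟩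
  rw [mem_preimage, map_smul, smul_eq_mul]
  exact ⟨mul_nonneg ht.1 hx_nonneg, mul_le_mul_of_nonneg_left hx_le ht.1⟩

theorem Icc_smul_slice_subset_slabPart (hK : Convex ℝ K) (h0 : 0 ∈ K) (f : StrongDual ℝ E)
    (ha : 0 ≤ a) : Icc (0 : ℝ) 1 • (K ∩ f ⁻¹' {a}) ⊆ slabPart K f a := by
  rintro _ ⟨l, hl, v, ⟨hvK, rfl⟩, rfl⟩
  refine ⟨hK.smul_mem_of_zero_mem h0 hvK hl, ?_⟩
  rw [mem_preimage, map_smul, smul_eq_mul]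
  exact ⟨mul_nonneg hl.1 ha, mul_le_of_le_one_left ha hl.2⟩

theorem mem_smul_slice_of_slabPart_eq_smul {x : E} (ha : 0 < a) (hx : x ∈ K) (hfx : 0 < f x)
    (hdil : slabPart K f (f x) = (f x / a) • slabPart K f a) :
    x ∈ (f x / a) • (K ∩ f ⁻¹' {a}) := by
  obtain ⟨v, hv, hvx⟩ : x ∈ (f x / a) • slabPart K f a := hdil ▸ ⟨hx, hfx.le, le_rfl⟩
  refine ⟨v, ⟨hv.1, ?_⟩, hvx⟩
  have f_smul : f x / a * f v = f x := by simpa using congrArg f hvx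
  have hfx_ne := hfx.ne'
  field_simp at f_smul
  exact f_smul

variable [MeasurableSpace E] [BorelSpace E] [FiniteDimensional ℝ E] {μ : Measure E}
  [μ.IsAddHaarMeasure]

theorem slabPart_mul_eq_smul_of_measure_eq (hK : IsClosed K) (hconv : Convex ℝ K) (h0 : 0 ∈ K)
    (ht : t ∈ Ioc (0 : ℝ) 1) (hμ_zero : μ (slabPart K f r) ≠ 0) (hμ_top : μ (slabPart K f r) ≠ ⊤)
    (hμ : μ (slabPart K f (t * r)) = ENNReal.ofReal (t ^ finrank ℝ E) * μ (slabPart K f r)) :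
    slabPart K f (t * r) = t • slabPart K f r := by
  have pow_pos : 0 < t ^ finrank ℝ E := pow_pos ht.1 _
  refine (eq_of_isClosed_subset_convex_of_measure_eq (μ := μ)
    ((isClosed_slabPart hK f r).smul_of_ne_zero ht.1.ne') (convex_slabPart hconv f _)
    (smul_slabPart_subset hconv h0 f r (Ioc_subset_Icc_self ht)) ?_ ?_ ?_).symm
  · rw [μ.addHaar_smul, abs_of_pos pow_pos, hμ]
  · rw [hμ]
    exact mul_ne_zero (ENNReal.ofReal_pos.2 pow_pos).ne' hμ_zero
  · rw [hμ]
    exact ENNReal.mul_ne_top ENNReal.ofReal_ne_top hμ_top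

theorem eq_zero_of_mem_slabPart_zero_of_slabPart_eq_smul {x : E} (hconv : Convex ℝ K)
    (ha : 0 ≤ a) (hμ_zero : μ (slabPart K f a) ≠ 0) (hμ_top : μ (slabPart K f a) ≠ ⊤)
    (hdil : ∀ t ∈ Ioc (0 : ℝ) 1, slabPart K f (t * a) = t • slabPart K f a)
    (hx : x ∈ slabPart K f 0) : x = 0 := by
  by_contra hx_ne
  have hS : Convex ℝ (slabPart K f a) := convex_slabPart hconv f a
  refine hμ_top (measure_eq_top_of_convex_of_ray_subset hS
    (nonempty_interior_of_convex_of_measure_ne_zero hS hμ_zero) hx_ne (y := x) fun r hr ↦ ?_)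
  have inv_mem : (1 + r)⁻¹ ∈ Ioc (0 : ℝ) 1 := ⟨by positivity, inv_le_one_of_one_le₀ (by linarith)⟩
  have hx_mem : x ∈ (1 + r)⁻¹ • slabPart K f a :=
    hdil _ inv_mem ▸ ⟨hx.1, hx.2.1, hx.2.2.trans (mul_nonneg inv_mem.1.le ha)⟩
  rwa [mem_smul_set_iff_inv_smul_mem₀ inv_mem.1.ne', inv_inv, add_smul, one_smul] at hx_mem

theorem exists_mem_slabPart_pos (hf : f ≠ 0) (hμ : μ (slabPart K f a) ≠ 0) :
    ∃ x ∈ slabPart K f a, 0 < f x := by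
  by_contra! hle
  have ker_ne_top : f.toLinearMap.ker ≠ ⊤ := fun h ↦
    hf (ContinuousLinearMap.coe_injective (LinearMap.ker_eq_top.1 h))
  have subset_ker : slabPart K f a ⊆ f.toLinearMap.ker := fun x hx ↦ (hle x hx).antisymm hx.2.1
  exact hμ (measure_mono_null subset_ker (μ.addHaar_submodule _ ker_ne_top))

theorem slabPart_eq_Icc_smul_slice_of_slabPart_eq_smul (hconv : Convex ℝ K) (h0 : 0 ∈ K)
    (hf : f ≠ 0) (ha : 0 < a) (hμ_zero : μ (slabPart K f a) ≠ 0)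
    (hμ_top : μ (slabPart K f a) ≠ ⊤)
    (hdil : ∀ t ∈ Ioc (0 : ℝ) 1, slabPart K f (t * a) = t • slabPart K f a) :
    slabPart K f a = Icc (0 : ℝ) 1 • (K ∩ f ⁻¹' {a}) := by
  have mem_smul_slice {x : E} (hx : x ∈ slabPart K f a) (hfx : 0 < f x) :
      x ∈ (f x / a) • (K ∩ f ⁻¹' {a}) := by
    refine mem_smul_slice_of_slabPart_eq_smul ha hx.1 hfx ?_
    simpa only [div_mul_cancel₀ _ ha.ne'] using
      hdil (f x / a) ⟨div_pos hfx ha, (div_le_one ha).2 hx.2.2⟩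
  refine Subset.antisymm (fun x hx ↦ ?_) (Icc_smul_slice_subset_slabPart hconv h0 f ha.le)
  rcases hx.2.1.lt_or_eq with hfx | hfx
  · have ratio_mem : f x / a ∈ Icc (0 : ℝ) 1 :=
      ⟨div_nonneg hfx.le ha.le, (div_le_one ha).2 hx.2.2⟩
    exact smul_set_subset_smul ratio_mem (mem_smul_slice hx hfx)
  · obtain ⟨y, hy, hfy⟩ := exists_mem_slabPart_pos hf hμ_zero
    obtain ⟨v, hv, -⟩ := mem_smul_slice hy hfy
    obtain rfl : x = 0 := eq_zero_of_mem_slabPart_zero_of_slabPart_eq_smul hconv ha.le hμ_zero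
      hμ_top hdil ⟨hx.1, hx.2.1, hfx.ge⟩
    exact ⟨0, ⟨le_rfl, zero_le_one⟩, v, hv, zero_smul ℝ v⟩

theorem slab_volume_forces_cone_general (hK : IsClosed K) (hconv : Convex ℝ K) (h0 : 0 ∈ K)
    (hf : f ≠ 0) (ha : 0 < a) {c : ℝ} (hc : 0 < c)
    (hvol : ∀ r ∈ Ioc 0 a, μ (slabPart K f r) = ENNReal.ofReal (c * r ^ finrank ℝ E)) :
    slabPart K f a = Icc (0 : ℝ) 1 • (K ∩ f ⁻¹' {a}) := by
  have hvol_a := hvol a ⟨ha, le_rfl⟩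
  have hμ_zero : μ (slabPart K f a) ≠ 0 := hvol_a ▸ (ENNReal.ofReal_pos.2 (by positivity)).ne'
  have hμ_top : μ (slabPart K f a) ≠ ⊤ := hvol_a ▸ ENNReal.ofReal_ne_top
  refine slabPart_eq_Icc_smul_slice_of_slabPart_eq_smul hconv h0 hf ha hμ_zero hμ_top fun t ht ↦
    slabPart_mul_eq_smul_of_measure_eq hK hconv h0 ht hμ_zero hμ_top ?_
  rw [hvol (t * a) ⟨mul_pos ht.1 ha, mul_le_of_le_one_left ha.le ht.2⟩, hvol_a,
    ← ENNReal.ofReal_mul (pow_nonneg ht.1.le _), mul_pow, mul_left_comm]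

end SlabPart

/-- If a compact convex set `K ⊆ ℝⁿ` containing the origin satisfies
`vol(K ∩ {0 ≤ x₁ ≤ r}) = rⁿ/n!` for all `r ∈ [0, a]`, then `K ∩ {0 ≤ x₁ ≤ a}` is the
cone with apex the origin over the top slice `Σ = K ∩ {x₁ = a}`. -/
theorem slab_volume_forces_cone (n : ℕ) (hn : 0 < n) (a : ℝ) (ha : 0 < a)
    (K : Set (Fin n → ℝ)) (hK : IsCompact K) (hconv : Convex ℝ K)
    (h0 : (0 : Fin n → ℝ) ∈ K)
    (hvol : ∀ r ∈ Set.Icc (0 : ℝ) a,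
      MeasureTheory.volume (K ∩ {x : Fin n → ℝ | 0 ≤ x ⟨0, hn⟩ ∧ x ⟨0, hn⟩ ≤ r}) =
        ENNReal.ofReal (r ^ n / n.factorial)) :
    K ∩ {x : Fin n → ℝ | 0 ≤ x ⟨0, hn⟩ ∧ x ⟨0, hn⟩ ≤ a} =
      {x : Fin n → ℝ | ∃ l ∈ Set.Icc (0 : ℝ) 1, ∃ v ∈ K, v ⟨0, hn⟩ = a ∧ x = l • v} := by
  let firstCoord : StrongDual ℝ (Fin n → ℝ) := ContinuousLinearMap.proj ⟨0, hn⟩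
  have firstCoord_ne_zero : firstCoord ≠ 0 := fun h ↦ by
    simpa [firstCoord] using DFunLike.congr_fun h 1
  have cone_eq : slabPart K firstCoord a = Icc (0 : ℝ) 1 • (K ∩ firstCoord ⁻¹' {a}) := by
    refine slab_volume_forces_cone_general (μ := volume) (c := (n.factorial : ℝ)⁻¹) hK.isClosed
      hconv h0 firstCoord_ne_zero ha (by positivity) fun r hr ↦ ?_
    rw [finrank_fin_fun, inv_mul_eq_div]
    exact hvol r (Ioc_subset_Icc_self hr)
  refine cone_eq.trans (Set.ext fun x ↦ ?_)
  simp [mem_smul, firstCoord, and_assoc, eq_comm]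
end

section
/- Let n ≥ 1 be an integer, let a > 0 and ε ∈ (0, a], and let K ⊆ ℝⁿ be a compact convex set containing the origin such that the Lebesgue measure of K ∩ {x ∈ ℝⁿ : 0 ≤ x₁ ≤ r} equals rⁿ/n! for every r ∈ [0, a]. If the segment {(t, 0, …, 0) : t ∈ [0, ε]} is contained in K, then the full segment {(t, 0, …, 0) : t ∈ [0, a]} is contained in K. -/
/-!
Write `S r` for the part of `K` in the slab `0 ≤ x₁ ≤ r`. Since `K` is star-shaped about `0`, the
homothetic copy `(ε / a) • S a` is contained in `S ε`. The volume condition says that both sets have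
the same positive measure. A closed set that contains almost all of a convex set of positive
measure contains all of it, so `S ε = (ε / a) • S a`, and scaling `ε • e₁ ∈ S ε` back by `a / ε`
gives `a • e₁ ∈ K`.
-/

open MeasureTheory Module Set
open scoped Pointwise

theorem smul_inter_preimage_Icc_subset {E : Type*} [AddCommGroup E] [Module ℝ E] {K : Set E}
    (hK : StarConvex ℝ 0 K) (ℓ : E →ₗ[ℝ] ℝ) {r : ℝ} (hr : r ∈ Icc (0 : ℝ) 1) (a : ℝ) :
    r • (K ∩ ℓ ⁻¹' Icc 0 a) ⊆ K ∩ ℓ ⁻¹' Icc 0 (r * a) := by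
  rintro _ ⟨x, ⟨hxK, hx_nonneg, hx_le⟩, rfl⟩
  refine ⟨hK.smul_mem hxK hr.1 hr.2, ?_⟩
  simp only [mem_preimage, map_smul, smul_eq_mul]
  exact ⟨mul_nonneg hr.1 hx_nonneg, mul_le_mul_of_nonneg_left hx_le hr.1⟩

section AddHaar

variable {E : Type*} [NormedAddCommGroup E] [NormedSpace ℝ E] [FiniteDimensional ℝ E]
  [MeasurableSpace E] [BorelSpace E] (μ : Measure E) [μ.IsAddHaarMeasure]

theorem interior_nonempty_of_convex_of_measure_ne_zero {C : Set E} (hC : Convex ℝ C)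
    (hμC : μ C ≠ 0) : (interior C).Nonempty := by
  contrapose! hμC with hempty
  have hfrontier : C ⊆ frontier C := by
    rw [frontier, hempty, sdiff_empty]
    exact subset_closure
  exact measure_mono_null hfrontier (hC.addHaar_frontier μ)

theorem subset_of_convex_of_isClosed_of_ae_le {C D : Set E} (hC : Convex ℝ C) (hD : IsClosed D)
    (hμC : μ C ≠ 0) (hCD : C ≤ᵐ[μ] D) : C ⊆ D := by
  have hnull : μ (interior C \ D) = 0 :=
    measure_mono_null (sdiff_subset_sdiff_left interior_subset) (ae_le_set.mp hCD)
  have hinterior : interior C ⊆ D :=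
    sdiff_eq_empty.mp (((isOpen_interior.sdiff hD).measure_eq_zero_iff μ).mp hnull)
  calc
    C ⊆ closure C := subset_closure
    _ = closure (interior C) := (hC.closure_interior_eq_closure_of_nonempty_interior
        (interior_nonempty_of_convex_of_measure_ne_zero μ hC hμC)).symm
    _ ⊆ D := closure_minimal hinterior hD

variable (ℓ : E →L[ℝ] ℝ) {K : Set E}

theorem inter_preimage_Icc_eq_smul_of_measure_le (hK : IsClosed K) (hconv : Convex ℝ K)
    (h0 : 0 ∈ K) {r a : ℝ} (hr : r ∈ Ioc (0 : ℝ) 1) (hne_zero : μ (K ∩ ℓ ⁻¹' Icc 0 a) ≠ 0)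
    (hne_top : μ (K ∩ ℓ ⁻¹' Icc 0 a) ≠ ⊤)
    (hle : μ (K ∩ ℓ ⁻¹' Icc 0 (r * a)) ≤
      ENNReal.ofReal (r ^ finrank ℝ E) * μ (K ∩ ℓ ⁻¹' Icc 0 a)) :
    K ∩ ℓ ⁻¹' Icc 0 (r * a) = r • (K ∩ ℓ ⁻¹' Icc 0 a) := by
  have hsub : r • (K ∩ ℓ ⁻¹' Icc 0 a) ⊆ K ∩ ℓ ⁻¹' Icc 0 (r * a) :=
    smul_inter_preimage_Icc_subset (hconv.starConvex h0) ℓ (Ioc_subset_Icc_self hr) a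
  have hclosed : IsClosed (r • (K ∩ ℓ ⁻¹' Icc 0 a)) :=
    (hK.inter (isClosed_Icc.preimage ℓ.continuous)).smul_of_ne_zero hr.1.ne'
  have hslab_convex : Convex ℝ (K ∩ ℓ ⁻¹' Icc 0 (r * a)) :=
    hconv.inter ((convex_Icc 0 (r * a)).linear_preimage ℓ.toLinearMap)
  have hμ_smul : μ (r • (K ∩ ℓ ⁻¹' Icc 0 a)) =
      ENNReal.ofReal (r ^ finrank ℝ E) * μ (K ∩ ℓ ⁻¹' Icc 0 a) :=
    Measure.addHaar_smul_of_nonneg μ hr.1.le _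
  have hslab_ne_zero : μ (K ∩ ℓ ⁻¹' Icc 0 (r * a)) ≠ 0 := by
    refine ne_bot_of_le_ne_bot ?_ (measure_mono hsub)
    rw [hμ_smul]
    exact mul_ne_zero (ENNReal.ofReal_pos.mpr (pow_pos hr.1 _)).ne' hne_zero
  have hslab_ne_top : μ (K ∩ ℓ ⁻¹' Icc 0 (r * a)) ≠ ⊤ :=
    ne_top_of_le_ne_top (ENNReal.mul_ne_top ENNReal.ofReal_ne_top hne_top) hle
  have hae : r • (K ∩ ℓ ⁻¹' Icc 0 a) =ᵐ[μ] (K ∩ ℓ ⁻¹' Icc 0 (r * a) : Set E) :=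
    ae_eq_of_subset_of_measure_ge hsub (hle.trans_eq hμ_smul.symm)
      hclosed.measurableSet.nullMeasurableSet hslab_ne_top
  exact (subset_of_convex_of_isClosed_of_ae_le μ hslab_convex hclosed hslab_ne_zero
    hae.symm.le).antisymm hsub

theorem segment_propagation_general (hK : IsClosed K) (hconv : Convex ℝ K) (h0 : 0 ∈ K)
    {a ε c : ℝ} (hε : ε ∈ Ioc 0 a) (hc : 0 < c)
    (hvol_ε : μ (K ∩ ℓ ⁻¹' Icc 0 ε) ≤ ENNReal.ofReal (ε ^ finrank ℝ E / c))
    (hvol_a : μ (K ∩ ℓ ⁻¹' Icc 0 a) = ENNReal.ofReal (a ^ finrank ℝ E / c))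
    {v : E} (hℓv : ℓ v ∈ Icc (0 : ℝ) 1) (hv : ε • v ∈ K) :
    ∀ t ∈ Icc (0 : ℝ) a, t • v ∈ K := by
  have ha : 0 < a := hε.1.trans_le hε.2
  have hratio : ε / a ∈ Ioc (0 : ℝ) 1 := ⟨div_pos hε.1 ha, (div_le_one ha).mpr hε.2⟩
  have hratio_mul : ε / a * a = ε := div_mul_cancel₀ ε ha.ne'
  have hcone : K ∩ ℓ ⁻¹' Icc 0 ε = (ε / a) • (K ∩ ℓ ⁻¹' Icc 0 a) := by
    have hpos : 0 < a ^ finrank ℝ E / c := by positivity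
    have hle : μ (K ∩ ℓ ⁻¹' Icc 0 (ε / a * a)) ≤
        ENNReal.ofReal ((ε / a) ^ finrank ℝ E) * μ (K ∩ ℓ ⁻¹' Icc 0 a) := by
      rwa [hvol_a, ← ENNReal.ofReal_mul (pow_nonneg hratio.1.le _), ← mul_div_assoc, ← mul_pow,
        hratio_mul]
    simpa only [hratio_mul] using inter_preimage_Icc_eq_smul_of_measure_le μ ℓ hK hconv h0 hratio
      (hvol_a ▸ (ENNReal.ofReal_pos.mpr hpos).ne') (hvol_a ▸ ENNReal.ofReal_ne_top) hle
  have hεv : ε • v ∈ K ∩ ℓ ⁻¹' Icc 0 ε := by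
    refine ⟨hv, ?_⟩
    simp only [mem_preimage, map_smul, smul_eq_mul]
    exact ⟨mul_nonneg hε.1.le hℓv.1, mul_le_of_le_one_right hε.1.le hℓv.2⟩
  have hav : a • v ∈ K := by
    rw [hcone, mem_smul_set_iff_inv_smul_mem₀ hratio.1.ne', smul_smul, inv_div,
      div_mul_cancel₀ a hε.1.ne'] at hεv
    exact hεv.1
  intro t ht
  have hscaled : (t / a) • a • v ∈ K :=
    hconv.smul_mem_of_zero_mem h0 hav ⟨div_nonneg ht.1 ha.le, (div_le_one ha).mpr ht.2⟩
  rwa [smul_smul, div_mul_cancel₀ t ha.ne'] at hscaled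

end AddHaar

/-- If a compact convex set `K ⊆ ℝⁿ` containing the origin satisfies
`vol(K ∩ {0 ≤ x₁ ≤ r}) = rⁿ/n!` for all `r ∈ [0, a]`, and `K` contains the segment
`{t • e₁ : t ∈ [0, ε]}` for some `ε ∈ (0, a]`, then `K` contains the full segment
`{t • e₁ : t ∈ [0, a]}`. -/
theorem segment_propagation (n : ℕ) (hn : 0 < n) (a ε : ℝ) (ha : 0 < a)
    (hε : ε ∈ Set.Ioc (0 : ℝ) a)
    (K : Set (Fin n → ℝ)) (hK : IsCompact K) (hconv : Convex ℝ K)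
    (h0 : (0 : Fin n → ℝ) ∈ K)
    (hvol : ∀ r ∈ Set.Icc (0 : ℝ) a,
      MeasureTheory.volume (K ∩ {x : Fin n → ℝ | 0 ≤ x ⟨0, hn⟩ ∧ x ⟨0, hn⟩ ≤ r}) =
        ENNReal.ofReal (r ^ n / n.factorial))
    (hseg : ∀ t ∈ Set.Icc (0 : ℝ) ε,
      t • ((Pi.single (⟨0, hn⟩ : Fin n) (1 : ℝ) : Fin n → ℝ)) ∈ K) :
    ∀ t ∈ Set.Icc (0 : ℝ) a,
      t • ((Pi.single (⟨0, hn⟩ : Fin n) (1 : ℝ) : Fin n → ℝ)) ∈ K := by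
  refine segment_propagation_general volume (ContinuousLinearMap.proj ⟨0, hn⟩) hK.isClosed hconv h0
    hε (c := n.factorial) (by positivity) ?_ ?_ (by simp) (hseg ε (right_mem_Icc.mpr hε.1.le))
  · rw [finrank_fin_fun]
    exact (hvol ε (Ioc_subset_Icc_self hε)).le
  · rw [finrank_fin_fun]
    exact hvol a (right_mem_Icc.mpr ha.le)
end
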